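/- Let H be a Hopf algebra over K and let M be a right H-Hopf module. Then the K-linear map P_R : M → M defined by P_R(m) = ∑ m₍₀₎ · S(m₍₁₎) is the projection from M onto the subspace of right coinvariants M^R = {m ∈ M : δ_R(m) = m ⊗ 1_H}; that is, P_R(m) ∈ M^R for every m ∈ M, P_R(m) = m for every m ∈ M^R, and in particular P_R ∘ P_R = P_R and Im(P_R) = M^R. -/

import Mathlib

/-!
STATEMENT 1: For a right `H`-Hopf module `M`, the map `P_R(m) = ∑ m₍₀₎ · S(m₍₁₎)`
is the projection from `M` onto the subspace of right coinvariants
`M^R = {m | δ_R(m) = m ⊗ 1}`: it takes values in `M^R`, restricts to the identity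
on `M^R`, is idempotent, and its image is exactly `M^R`.
-/

open TensorProduct Coalgebra HopfAlgebra LinearMap

theorem rightHopfModule_PR_is_projection_onto_coinvariants
    (K : Type*) [Field K] [CharZero K]
    (H : Type*) [Ring H] [HopfAlgebra K H]
    (M : Type*) [AddCommGroup M] [Module K M]
    -- right H-module structure on M
    (act : M ⊗[K] H →ₗ[K] M)
    (act_one : ∀ m : M, act (m ⊗ₜ[K] (1 : H)) = m)
    (act_mul : ∀ (m : M) (h h' : H),
      act (act (m ⊗ₜ[K] h) ⊗ₜ[K] h') = act (m ⊗ₜ[K] (h * h')))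
    -- right H-comodule structure on M
    (δ : M →ₗ[K] M ⊗[K] H)
    (coassoc : ∀ m : M,
      (TensorProduct.assoc K M H H) ((δ.rTensor H) (δ m)) =
        ((Coalgebra.comul (R := K) (A := H)).lTensor M) (δ m))
    (counital : ∀ m : M,
      (TensorProduct.rid K M) (((Coalgebra.counit (R := K) (A := H)).lTensor M) (δ m)) = m)
    -- Hopf module compatibility: δ(m · h) = δ(m)Δ(h)
    (hopf_compat : ∀ (m : M) (h : H),
      δ (act (m ⊗ₜ[K] h)) =
        (TensorProduct.map act (LinearMap.mul' K H))
          ((TensorProduct.tensorTensorTensorComm K M H H H)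
            (δ m ⊗ₜ[K] Coalgebra.comul h))) :
    let PR : M →ₗ[K] M := act ∘ₗ ((antipode (R := K) (A := H)).lTensor M) ∘ₗ δ
    (∀ m : M, δ (PR m) = PR m ⊗ₜ[K] (1 : H)) ∧
    (∀ m : M, δ m = m ⊗ₜ[K] (1 : H) → PR m = m) ∧
    (PR ∘ₗ PR = PR) ∧
    (Set.range PR = {m : M | δ m = m ⊗ₜ[K] (1 : H)}) := by
  intro PR
  let S : H →ₗ[K] H := antipode (R := K) (A := H)
  let D : H →ₗ[K] H ⊗[K] H := Coalgebra.comul (R := K) (A := H)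
  have hPR : ∀ m, PR m = act (S.lTensor M (δ m)) := fun m => rfl
  let A : (M ⊗[K] H) ⊗[K] (H ⊗[K] H) →ₗ[K] M ⊗[K] H :=
    (TensorProduct.map act (LinearMap.mul' K H)) ∘ₗ
      (TensorProduct.tensorTensorTensorComm K M H H H).toLinearMap
  have hA : ∀ m h a b, A ((m ⊗ₜ[K] h) ⊗ₜ[K] (a ⊗ₜ[K] b)) = act (m ⊗ₜ[K] a) ⊗ₜ[K] (h * b) := by
    intro m h a b
    simp [A]
  have hAmul : ∀ x a b, A (A (x ⊗ₜ[K] a) ⊗ₜ[K] b) = A (x ⊗ₜ[K] (a * b)) := by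
    intro x a b
    induction x using TensorProduct.induction_on with
    | zero => simp
    | add x y hx hy => simp only [TensorProduct.add_tmul, map_add, hx, hy]
    | tmul m h =>
      induction a using TensorProduct.induction_on with
      | zero => simp
      | add x y hx hy =>
        simp only [TensorProduct.add_tmul, TensorProduct.tmul_add, add_mul, map_add, hx, hy]
      | tmul a a' =>
        induction b using TensorProduct.induction_on with
        | zero => simp
        | add x y hx hy => simp only [TensorProduct.tmul_add, mul_add, map_add, hx, hy]
        | tmul b b' =>
          simp only [hA, Algebra.TensorProduct.tmul_mul_tmul, act_mul, mul_assoc]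
  have hA1 : ∀ x, A (x ⊗ₜ[K] 1) = x := by
    intro x
    induction x using TensorProduct.induction_on with
    | zero => simp
    | add x y hx hy => simp only [TensorProduct.add_tmul, map_add, hx, hy]
    | tmul m h => rw [Algebra.TensorProduct.one_def, hA, act_one, mul_one]
  have hcompat : ∀ m h, δ (act (m ⊗ₜ[K] h)) = A (δ m ⊗ₜ[K] D h) := hopf_compat
  -- step 1: P(m₀) · m₁ = m
  have step1 : ∀ m, act (PR.rTensor H (δ m)) = m := by
    intro m
    have e1 : ∀ t : (M ⊗[K] H) ⊗[K] H,
        act ((act ∘ₗ S.lTensor M).rTensor H t) =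
          act ((LinearMap.mul' K H ∘ₗ S.rTensor H).lTensor M (TensorProduct.assoc K M H H t)) := by
      intro t
      induction t using TensorProduct.induction_on with
      | zero => simp
      | add x y hx hy => simp only [map_add, hx, hy]
      | tmul x h =>
        induction x using TensorProduct.induction_on with
        | zero => simp
        | add x y hx hy => simp only [TensorProduct.add_tmul, map_add, hx, hy]
        | tmul m g => simp [act_mul]
    have e2 : ∀ t : M ⊗[K] H,
        act ((LinearMap.mul' K H ∘ₗ S.rTensor H).lTensor M (D.lTensor M t)) =
          TensorProduct.rid K M ((Coalgebra.counit (R := K) (A := H)).lTensor M t) := by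
      intro t
      induction t using TensorProduct.induction_on with
      | zero => simp
      | add x y hx hy => simp only [map_add, hx, hy]
      | tmul m h =>
        have := mul_antipode_rTensor_comul_apply (R := K) h
        simp only [LinearMap.lTensor_tmul, LinearMap.comp_apply, S, D, this,
          TensorProduct.rid_tmul, Algebra.algebraMap_eq_smul_one, TensorProduct.tmul_smul,
          map_smul, act_one]
    have e3 : PR.rTensor H (δ m) = (act ∘ₗ S.lTensor M).rTensor H (δ.rTensor H (δ m)) := by
      rw [← LinearMap.rTensor_comp_apply]
      rfl
    rw [e3, e1, coassoc, e2, counital]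
  let j : M →ₗ[K] M ⊗[K] H := (TensorProduct.mk K M H).flip 1 ∘ₗ PR
  have hj : ∀ m, j m = PR m ⊗ₜ[K] (1 : H) := fun m => rfl
  -- step 2: (P(m₀) ⊗ 1) Δ(m₁) = δ m
  have step2 : ∀ m, A (TensorProduct.map j D (δ m)) = δ m := by
    intro m
    have e0 : ∀ (m : M) (y : H ⊗[K] H), A (j m ⊗ₜ[K] y) =
        (act ∘ₗ PR.rTensor H).rTensor H ((TensorProduct.assoc K M H H).symm (m ⊗ₜ[K] y)) := by
      intro m y
      induction y using TensorProduct.induction_on with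
      | zero => simp
      | add x y hx hy => simp only [TensorProduct.tmul_add, map_add, hx, hy]
      | tmul a b => rw [hj, hA]; simp
    have e1 : ∀ t : M ⊗[K] H, A (TensorProduct.map j D t) =
        (act ∘ₗ PR.rTensor H).rTensor H
          ((TensorProduct.assoc K M H H).symm (D.lTensor M t)) := by
      intro t
      induction t using TensorProduct.induction_on with
      | zero => simp
      | add x y hx hy => simp only [map_add, hx, hy]
      | tmul m h => rw [TensorProduct.map_tmul, LinearMap.lTensor_tmul, e0]
    have e2 : (act ∘ₗ PR.rTensor H) ∘ₗ δ = LinearMap.id := LinearMap.ext step1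
    rw [e1, ← coassoc, LinearEquiv.symm_apply_apply, ← LinearMap.comp_apply,
      ← LinearMap.rTensor_comp, e2, LinearMap.rTensor_id, LinearMap.id_apply]
  have h1 : ∀ m : M, δ (PR m) = PR m ⊗ₜ[K] (1 : H) := by
    intro m
    have e1 : ∀ t : M ⊗[K] H, δ (act (S.lTensor M t)) =
        A (TensorProduct.map δ (D ∘ₗ S) t) := by
      intro t
      induction t using TensorProduct.induction_on with
      | zero => simp
      | add x y hx hy => simp only [map_add, hx, hy]
      | tmul m h => rw [LinearMap.lTensor_tmul, hcompat]; rfl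
    have e2 : δ = (A ∘ₗ TensorProduct.map j D) ∘ₗ δ := (LinearMap.ext step2).symm
    have e3 : TensorProduct.map δ (D ∘ₗ S) (δ m) =
        TensorProduct.map (A ∘ₗ TensorProduct.map j D) (D ∘ₗ S) (δ.rTensor H (δ m)) := by
      rw [← LinearMap.comp_apply (TensorProduct.map (A ∘ₗ TensorProduct.map j D) (D ∘ₗ S)),
        LinearMap.map_comp_rTensor, ← e2]
    have e4 : ∀ t : (M ⊗[K] H) ⊗[K] H,
        A (TensorProduct.map (A ∘ₗ TensorProduct.map j D) (D ∘ₗ S) t) =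
          A (TensorProduct.map j (D ∘ₗ LinearMap.mul' K H ∘ₗ S.lTensor H)
            (TensorProduct.assoc K M H H t)) := by
      intro t
      induction t using TensorProduct.induction_on with
      | zero => simp
      | add x y hx hy => simp only [map_add, hx, hy]
      | tmul x h =>
        induction x using TensorProduct.induction_on with
        | zero => simp
        | add x y hx hy => simp only [TensorProduct.add_tmul, map_add, hx, hy]
        | tmul m g =>
          simp only [TensorProduct.map_tmul, LinearMap.comp_apply, TensorProduct.assoc_tmul,
            LinearMap.lTensor_tmul, LinearMap.mul'_apply, hAmul]
          simp only [D, Bialgebra.comul_mul]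
    have e5 : ∀ t : M ⊗[K] H,
        A (TensorProduct.map j (D ∘ₗ LinearMap.mul' K H ∘ₗ S.lTensor H) (D.lTensor M t)) =
          j (TensorProduct.rid K M ((Coalgebra.counit (R := K) (A := H)).lTensor M t)) := by
      intro t
      induction t using TensorProduct.induction_on with
      | zero => simp
      | add x y hx hy => simp only [map_add, hx, hy]
      | tmul m h =>
        have := mul_antipode_lTensor_comul_apply (R := K) h
        simp only [LinearMap.lTensor_tmul, TensorProduct.map_tmul, LinearMap.comp_apply, S, D,
          this, TensorProduct.rid_tmul, Algebra.algebraMap_eq_smul_one, TensorProduct.tmul_smul,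
          map_smul, Bialgebra.comul_one, hA1]
    rw [hPR, e1, e3, e4, coassoc, e5, counital, hj, hPR]
  have h2 : ∀ m : M, δ m = m ⊗ₜ[K] (1 : H) → PR m = m := by
    intro m hm
    rw [hPR, hm, LinearMap.lTensor_tmul]
    simp only [S, antipode_one, act_one]
  refine ⟨h1, h2, LinearMap.ext fun m => h2 _ (h1 m), ?_⟩
  ext m
  constructor
  · rintro ⟨n, rfl⟩
    exact h1 n
  · intro hm
    exact ⟨m, h2 m hm⟩
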